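/- arXiv:1306.2778 — 5 statements merged into one kernel-verified Lean document; each statement's English description precedes it below -/
import Mathlib

section
/- Let α ∈ (0,1) and λ > 0. Then for every t > 0, the function t ↦ E_{α,1}(-λ t^α) is differentiable and d/dt E_{α,1}(-λ t^α) = -λ t^{α-1} E_{α,α}(-λ t^α). -/
/-!
`E_{α,1}` is an entire power series which may be differentiated term by term. Since
`Γ(α(k+1) + 1) = α(k+1) Γ(αk + α)`, the differentiated series is `α⁻¹ E_{α,α}`
(`hasDerivAt_mittagLeffler_one`), and the theorem follows from the chain rule applied
to `s ↦ -λ s^α`.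

Convergence (`summable_mittagLeffler`) is the ratio test. Log-convexity of `Γ` at
`x + 1 = α (x + α) + (1 - α) (x + α + 1)` gives `x Γ(x) ≤ (x + α)^(1-α) Γ(x + α)`
(`mul_Gamma_le_rpow_mul_Gamma_add`), so `Γ(x) / Γ(x + α)` tends to `0` as `x → ∞`.
-/

/-- The (real) Mittag-Leffler function `E_{α,β}(x) = ∑_{k=0}^∞ x^k / Γ(αk + β)`.
Terms where `αk + β` is a pole of `Γ` vanish, since Mathlib's `Real.Gamma`
is zero at nonpositive integers. -/
noncomputable def mittagLeffler (α β x : ℝ) : ℝ :=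
  ∑' k : ℕ, x ^ k / Real.Gamma (α * k + β)

open Filter Topology

theorem mul_Gamma_le_rpow_mul_Gamma_add {α x : ℝ} (h0 : 0 < α) (h1 : α < 1) (hx : 0 < x) :
    x * Real.Gamma x ≤ (x + α) ^ (1 - α) * Real.Gamma (x + α) := by
  have hxα : 0 < x + α := by linarith
  have hG := Real.Gamma_pos_of_pos hxα
  have h := Real.Gamma_mul_add_mul_le_rpow_Gamma_mul_rpow_Gamma (s := x + α) (t := x + α + 1)
    (a := α) (b := 1 - α) hxα (by linarith) h0 (by linarith) (by ring)
  rw [show α * (x + α) + (1 - α) * (x + α + 1) = x + 1 by ring, Real.Gamma_add_one hx.ne',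
    Real.Gamma_add_one hxα.ne', Real.mul_rpow hxα.le hG.le] at h
  have h2 : Real.Gamma (x + α) ^ α * Real.Gamma (x + α) ^ (1 - α) = Real.Gamma (x + α) := by
    rw [← Real.rpow_add hG]; simp
  calc x * Real.Gamma x ≤ _ := h
    _ = (x + α) ^ (1 - α) * (Real.Gamma (x + α) ^ α * Real.Gamma (x + α) ^ (1 - α)) := by ring
    _ = _ := by rw [h2]

/-- The quantitative form of `Γ(x) / Γ(x + α) → 0` used in the ratio test. -/
theorem Gamma_le_two_mul_rpow_mul_Gamma_add {α x : ℝ} (h0 : 0 < α) (h1 : α < 1) (hx : α ≤ x) :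
    Real.Gamma x ≤ 2 * x ^ (-α) * Real.Gamma (x + α) := by
  have hx0 : 0 < x := by linarith
  have hG := Real.Gamma_pos_of_pos (show 0 < x + α by linarith)
  have h2 : (x + α) ^ (1 - α) ≤ 2 * (x * x ^ (-α)) := by
    calc (x + α) ^ (1 - α) ≤ (2 * x) ^ (1 - α) :=
          Real.rpow_le_rpow (by linarith) (by linarith) (by linarith)
      _ = 2 ^ (1 - α) * x ^ (1 - α) := Real.mul_rpow (by norm_num) hx0.le
      _ ≤ 2 ^ (1 : ℝ) * x ^ (1 - α) := by
          gcongr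
          · norm_num
          · linarith
      _ = 2 * (x * x ^ (-α)) := by
          rw [sub_eq_add_neg, Real.rpow_add hx0, Real.rpow_one, Real.rpow_one]
  have h3 := mul_Gamma_le_rpow_mul_Gamma_add h0 h1 hx0
  refine le_of_mul_le_mul_left ?_ hx0
  calc x * Real.Gamma x ≤ _ := h3
    _ ≤ 2 * (x * x ^ (-α)) * Real.Gamma (x + α) := by gcongr
    _ = _ := by ring

theorem summable_mittagLeffler {α β : ℝ} (h0 : 0 < α) (h1 : α < 1) (hβ : 0 < β) (x : ℝ) :
    Summable fun k : ℕ => x ^ k / Real.Gamma (α * k + β) := by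
  have hlin : Tendsto (fun k : ℕ => α * (k : ℝ) + β) atTop atTop :=
    tendsto_atTop_add_const_right _ _ (tendsto_natCast_atTop_atTop.const_mul_atTop h0)
  have hlim : Tendsto (fun k : ℕ => |x| * (2 * (α * (k : ℝ) + β) ^ (-α))) atTop (𝓝 0) := by
    simpa using (((tendsto_rpow_neg_atTop h0).comp hlin).const_mul 2).const_mul |x|
  refine summable_of_ratio_norm_eventually_le (r := 1 / 2) (by norm_num) ?_
  filter_upwards [hlim.eventually_le_const (show (0 : ℝ) < 1 / 2 by norm_num),
    hlin.eventually_ge_atTop α] with k hk hkα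
  have hy : 0 < α * (k : ℝ) + β := by linarith
  have hG := Real.Gamma_pos_of_pos hy
  have hG' := Real.Gamma_pos_of_pos (show 0 < α * (k : ℝ) + β + α by linarith)
  have hle := Gamma_le_two_mul_rpow_mul_Gamma_add h0 h1 hkα
  push_cast
  rw [show α * ((k : ℝ) + 1) + β = α * k + β + α by ring, norm_div, norm_div, norm_pow, norm_pow,
    Real.norm_of_nonneg hG.le, Real.norm_of_nonneg hG'.le, Real.norm_eq_abs, ← mul_div_assoc,
    div_le_div_iff₀ hG' hG]
  calc |x| ^ (k + 1) * Real.Gamma (α * k + β)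
      ≤ |x| ^ (k + 1) * (2 * (α * k + β) ^ (-α) * Real.Gamma (α * k + β + α)) := by gcongr
    _ = |x| * (2 * (α * k + β) ^ (-α)) * |x| ^ k * Real.Gamma (α * k + β + α) := by ring
    _ ≤ 1 / 2 * |x| ^ k * Real.Gamma (α * k + β + α) := by gcongr

/-- The coefficients of `E_{α,1}'` are those of `α⁻¹ E_{α,α}`. -/
theorem deriv_coeff_mittagLeffler {α : ℝ} (h0 : 0 < α) (x : ℝ) (k : ℕ) :
    ((k + 1 : ℕ) : ℝ) * x ^ (k + 1 - 1) / Real.Gamma (α * (k + 1 : ℕ) + 1)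
      = α⁻¹ * (x ^ k / Real.Gamma (α * k + α)) := by
  have hy : 0 < α * (k : ℝ) + α := by positivity
  have hG := (Real.Gamma_pos_of_pos hy).ne'
  push_cast
  rw [show α * ((k : ℝ) + 1) + 1 = α * k + α + 1 by ring, Real.Gamma_add_one hy.ne',
    show α * (k : ℝ) + α = α * (k + 1) by ring] at *
  have : (k : ℝ) + 1 ≠ 0 := by positivity
  field_simp

theorem hasDerivAt_mittagLeffler_one {α : ℝ} (h0 : 0 < α) (h1 : α < 1) (x : ℝ) :
    HasDerivAt (mittagLeffler α 1) (α⁻¹ * mittagLeffler α α x) x := by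
  have hsum (y : ℝ) :
      Summable fun k : ℕ => (k : ℝ) * y ^ (k - 1) / Real.Gamma (α * k + 1) := by
    rw [← summable_nat_add_iff 1]
    simp only [deriv_coeff_mittagLeffler h0]
    exact (summable_mittagLeffler h0 h1 h0 y).mul_left _
  have hx : x ∈ Metric.ball (0 : ℝ) (|x| + 1) := by simp
  have h := hasDerivAt_tsum_of_isPreconnected (hsum (|x| + 1)) Metric.isOpen_ball
    (convex_ball (0 : ℝ) (|x| + 1)).isPreconnected
    (g := fun (k : ℕ) y => y ^ k / Real.Gamma (α * k + 1))
    (g' := fun (k : ℕ) y => (k : ℝ) * y ^ (k - 1) / Real.Gamma (α * k + 1))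
    (fun k y _ => (hasDerivAt_pow k y).div_const _)
    (fun k y hy => by
      have hG := Real.Gamma_pos_of_pos (show 0 < α * (k : ℝ) + 1 by positivity)
      have hy' : |y| ≤ |x| + 1 := by
        have := mem_ball_zero_iff.mp hy
        rw [Real.norm_eq_abs] at this
        exact this.le
      rw [norm_div, norm_mul, norm_pow, Real.norm_of_nonneg hG.le, Real.norm_natCast,
        Real.norm_eq_abs]
      gcongr)
    hx (summable_mittagLeffler h0 h1 one_pos x) hx
  have hval : ∑' k : ℕ, (k : ℝ) * x ^ (k - 1) / Real.Gamma (α * k + 1)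
      = α⁻¹ * mittagLeffler α α x := by
    rw [(hsum x).tsum_eq_zero_add, mittagLeffler, ← tsum_mul_left]
    simp only [deriv_coeff_mittagLeffler h0]
    simp
  rw [← hval]
  exact h

/-- For `α ∈ (0,1)`, `λ > 0` and `t > 0`, the function `t ↦ E_{α,1}(-λ t^α)` is
differentiable with derivative `-λ t^{α-1} E_{α,α}(-λ t^α)`. -/
theorem hasDerivAt_mittagLeffler_neg_lambda_rpow
    (α lam : ℝ) (hα : α ∈ Set.Ioo (0 : ℝ) 1) (hlam : 0 < lam)
    (t : ℝ) (ht : 0 < t) :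
    HasDerivAt (fun s : ℝ => mittagLeffler α 1 (-lam * s ^ α))
      (-lam * t ^ (α - 1) * mittagLeffler α α (-lam * t ^ α)) t := by
  have hin : HasDerivAt (fun s : ℝ => -lam * s ^ α) (-lam * (α * t ^ (α - 1))) t :=
    (Real.hasDerivAt_rpow_const (Or.inl ht.ne')).const_mul _
  have h := (hasDerivAt_mittagLeffler_one hα.1 hα.2 (-lam * t ^ α)).comp t hin
  refine h.congr_deriv ?_
  have := hα.1.ne'
  field_simp
end

section
/- Let 0 < α₂ < α₁ < 1. Then the function η ↦ (1-η)^{α₁-2} (η^{-α₂} - 1) is nonnegative on (0,1) and integrable on (0,1); that is, ∫_0^1 (1-η)^{α₁-2} (η^{-α₂} - 1) dη < ∞. -/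
/-!
For `0 < α₂ ≤ 1` and `η ∈ (0,1)` one has `η ≤ η ^ α₂`, hence
`η ^ (-α₂) - 1 = η ^ (-α₂) * (1 - η ^ α₂) ≤ η ^ (-α₂) * (1 - η)`.
The extra factor `1 - η` absorbs one order of the singularity at `1`, so on the whole interval the
kernel lies between `0` and `η ^ (-α₂) * (1 - η) ^ (α₁ - 1)`, the integrand of the convergent
Beta integral `B(1 - α₂, α₁)`.
-/

theorem rpow_neg_sub_one_le {a x : ℝ} (ha : a ≤ 1) (hx : x ∈ Set.Ioo (0 : ℝ) 1) :
    x ^ (-a) - 1 ≤ x ^ (-a) * (1 - x) := by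
  have h1 : x ≤ x ^ a := by
    simpa using Real.rpow_le_rpow_of_exponent_ge hx.1 hx.2.le ha
  have h2 : x ^ (-a) * x ^ a = 1 := by
    rw [← Real.rpow_add hx.1]; simp
  nlinarith [mul_le_mul_of_nonneg_left h1 (Real.rpow_nonneg hx.1.le (-a))]

/-- The real Beta integrand is the norm of the complex one, whose integrability is
`Complex.betaIntegral_convergent`. -/
theorem integrableOn_beta_integrand {u v : ℝ} (hu : 0 < u) (hv : 0 < v) :
    MeasureTheory.IntegrableOn (fun x : ℝ => x ^ (u - 1) * (1 - x) ^ (v - 1))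
      (Set.Ioo 0 1) := by
  have h := Complex.betaIntegral_convergent (u := (u : ℂ)) (v := (v : ℂ))
    (by simpa using hu) (by simpa using hv)
  rw [intervalIntegrable_iff_integrableOn_Ioo_of_le zero_le_one] at h
  refine MeasureTheory.IntegrableOn.congr_fun h.norm (fun x hx => ?_) measurableSet_Ioo
  have e : (1 : ℂ) - (x : ℂ) = ((1 - x : ℝ) : ℂ) := by push_cast; rfl
  simp only [e, norm_mul]
  rw [Complex.norm_cpow_eq_rpow_re_of_pos hx.1,
    Complex.norm_cpow_eq_rpow_re_of_pos (sub_pos.2 hx.2)]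
  simp

open Set MeasureTheory

/-- For `0 < α₂ < α₁ < 1`, the function `η ↦ (1-η)^{α₁-2} (η^{-α₂} - 1)` is
nonnegative and Lebesgue integrable on `(0,1)`. -/
theorem integrable_singular_kernel (α₁ α₂ : ℝ) (h₂ : 0 < α₂) (h₂₁ : α₂ < α₁) (h₁ : α₁ < 1) :
    (∀ η ∈ Set.Ioo (0 : ℝ) 1, 0 ≤ (1 - η) ^ (α₁ - 2) * (η ^ (-α₂) - 1)) ∧
    IntegrableOn (fun η : ℝ => (1 - η) ^ (α₁ - 2) * (η ^ (-α₂) - 1)) (Set.Ioo 0 1) := by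
  have hnonneg : ∀ η ∈ Set.Ioo (0 : ℝ) 1,
      0 ≤ (1 - η) ^ (α₁ - 2) * (η ^ (-α₂) - 1) := fun η hη =>
    mul_nonneg (Real.rpow_nonneg (sub_pos.2 hη.2).le _)
      (sub_nonneg.2 (Real.one_le_rpow_of_pos_of_le_one_of_nonpos hη.1 hη.2.le (by linarith)))
  refine ⟨hnonneg, ?_⟩
  have hbeta := integrableOn_beta_integrand (u := 1 - α₂) (v := α₁) (by linarith) (by linarith)
  refine Integrable.mono' hbeta (by fun_prop) ?_
  filter_upwards [ae_restrict_mem measurableSet_Ioo] with η hη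
  rw [Real.norm_of_nonneg (hnonneg η hη)]
  have hpos : 0 < 1 - η := sub_pos.2 hη.2
  calc (1 - η) ^ (α₁ - 2) * (η ^ (-α₂) - 1)
      ≤ (1 - η) ^ (α₁ - 2) * (η ^ (-α₂) * (1 - η)) :=
        mul_le_mul_of_nonneg_left (rpow_neg_sub_one_le (by linarith) hη)
          (Real.rpow_nonneg hpos.le _)
    _ = η ^ (1 - α₂ - 1) * (1 - η) ^ (α₁ - 1) := by
        rw [show α₁ - 1 = (α₁ - 2) + 1 by ring, Real.rpow_add_one hpos.ne',
          show 1 - α₂ - 1 = -α₂ by ring]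
        ring
end

section
/- Let E be a Banach space, T > 0, β ∈ (0,1], C ≥ 0, and let K : C([0,T];E) → C([0,T];E) be a map such that for all u, v ∈ C([0,T];E) and all t ∈ [0,T], ‖(Ku)(t) - (Kv)(t)‖ ≤ C ∫_0^t (t-τ)^{β-1} ‖u(τ) - v(τ)‖ dτ. Then for every n ≥ 1, every u, v ∈ C([0,T];E) and every t ∈ [0,T], ‖(Kⁿu)(t) - (Kⁿv)(t)‖ ≤ (C Γ(β))ⁿ t^{βn} / Γ(βn + 1) · sup_{s ∈ [0,T]} ‖u(s) - v(s)‖. -/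
/-!
Induction on `n`, starting from the trivial case `n = 0`. Inserting the bound for `Kⁿ` into the
hypothesis on `K` leaves the Beta integral
`∫₀ᵗ (t-τ)^{β-1} τ^{βn} dτ = Γ(β) Γ(βn+1) / Γ(β(n+1)+1) · t^{β(n+1)}`
(`integral_kernel_mul_rpow`), whose factor `Γ(βn+1)` cancels the denominator of the bound for `Kⁿ`.
-/

open Set MeasureTheory

/-- The singular kernel is integrable because `β > 0`; the other factor is bounded on `(0, a)`. -/
lemma integrableOn_kernel_mul_rpow {a β γ : ℝ} (ha : 0 < a) (hβ : 0 < β) (hγ : 0 ≤ γ) :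
    IntegrableOn (fun τ : ℝ => (a - τ) ^ (β - 1) * τ ^ γ) (Set.Ioo 0 a) := by
  have h1 : IntervalIntegrable (fun τ : ℝ => (a - τ) ^ (β - 1)) volume 0 a := by
    have h := (intervalIntegral.intervalIntegrable_rpow' (a := 0) (b := a)
      (r := β - 1) (by linarith)).comp_sub_left a
    simpa using h.symm
  have h2 : IntervalIntegrable (fun τ : ℝ => (a - τ) ^ (β - 1) * τ ^ γ) volume 0 a :=
    h1.mul_continuousOn (Real.continuous_rpow_const hγ).continuousOn
  exact ((intervalIntegrable_iff_integrableOn_Ioo_of_le ha.le).1 h2)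

/-- The Beta integral on `(0, a)`, obtained from the complex `Complex.betaIntegral`. -/
lemma integral_kernel_mul_rpow {a β γ : ℝ} (ha : 0 < a) (hβ : 0 < β) (hγ : 0 ≤ γ) :
    ∫ τ in Set.Ioo 0 a, (a - τ) ^ (β - 1) * τ ^ γ =
      a ^ (γ + β) * (Real.Gamma β * Real.Gamma (γ + 1) / Real.Gamma (γ + β + 1)) := by
  have hG : Real.Gamma (γ + β + 1) ≠ 0 := (Real.Gamma_pos_of_pos (by linarith)).ne'
  have hs := Complex.betaIntegral_scaled ((γ + 1 : ℝ) : ℂ) (β : ℂ) ha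
  have hb := Complex.Gamma_mul_Gamma_eq_betaIntegral (s := ((γ + 1 : ℝ) : ℂ)) (t := (β : ℂ))
    (by simp only [Complex.ofReal_re]; linarith) (by simpa using hβ)
  have hsum : ((γ + 1 : ℝ) : ℂ) + (β : ℂ) = ((γ + β + 1 : ℝ) : ℂ) := by push_cast; ring
  rw [hsum] at hs hb
  rw [Complex.Gamma_ofReal, Complex.Gamma_ofReal, Complex.Gamma_ofReal] at hb
  have hbeta : Complex.betaIntegral ((γ + 1 : ℝ) : ℂ) (β : ℂ) =
      ((Real.Gamma β * Real.Gamma (γ + 1) / Real.Gamma (γ + β + 1) : ℝ) : ℂ) := by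
    have hG' : (Real.Gamma (γ + β + 1) : ℂ) ≠ 0 := by exact_mod_cast hG
    rw [Complex.ofReal_div, eq_div_iff hG', mul_comm, ← hb]
    push_cast; ring
  have hpow : (a : ℂ) ^ (((γ + β + 1 : ℝ) : ℂ) - 1) = ((a ^ (γ + β) : ℝ) : ℂ) := by
    rw [Complex.ofReal_cpow ha.le]; push_cast; ring_nf
  rw [hbeta, hpow, intervalIntegral.integral_of_le ha.le, integral_Ioc_eq_integral_Ioo] at hs
  have hc : ∫ τ in Set.Ioo 0 a, (τ : ℂ) ^ (((γ + 1 : ℝ) : ℂ) - 1) * ((a : ℂ) - τ) ^ ((β : ℂ) - 1) =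
      ∫ τ in Set.Ioo 0 a, (((a - τ) ^ (β - 1) * τ ^ γ : ℝ) : ℂ) := by
    refine setIntegral_congr_fun measurableSet_Ioo fun τ hτ => ?_
    rw [Complex.ofReal_mul, Complex.ofReal_cpow hτ.1.le,
      Complex.ofReal_cpow (sub_nonneg.2 hτ.2.le), mul_comm]
    push_cast; ring_nf
  rw [hc, integral_complex_ofReal] at hs
  exact_mod_cast hs

/-- Iterates of a map `K` on `C([0,T];E)` satisfying a weakly singular Gronwall-type
contraction estimate satisfy
`‖(Kⁿu)(t) - (Kⁿv)(t)‖ ≤ (C Γ(β))ⁿ t^{βn} / Γ(βn+1) · ‖u - v‖_∞`. -/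
theorem iterate_singular_contraction_estimate
    (E : Type*) [NormedAddCommGroup E] [NormedSpace ℝ E] [CompleteSpace E]
    (T : ℝ) (hT : 0 < T) (β : ℝ) (hβ : β ∈ Set.Ioc (0 : ℝ) 1) (C : ℝ) (hC : 0 ≤ C)
    (K : C(Set.Icc (0 : ℝ) T, E) → C(Set.Icc (0 : ℝ) T, E))
    (hK : ∀ u v : C(Set.Icc (0 : ℝ) T, E), ∀ t : Set.Icc (0 : ℝ) T,
      ‖K u t - K v t‖ ≤ C * ∫ τ in Set.Ioo (0 : ℝ) (t : ℝ), ((t : ℝ) - τ) ^ (β - 1) *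
        ‖Set.IccExtend hT.le u τ - Set.IccExtend hT.le v τ‖) :
    ∀ n : ℕ, 1 ≤ n → ∀ u v : C(Set.Icc (0 : ℝ) T, E), ∀ t : Set.Icc (0 : ℝ) T,
      ‖(K^[n]) u t - (K^[n]) v t‖ ≤
        (C * Real.Gamma β) ^ n * (t : ℝ) ^ (β * n) / Real.Gamma (β * n + 1) * ‖u - v‖ := by
  intro n hn u v
  clear hn
  have hβ0 : 0 < β := hβ.1
  have hGβ : 0 < Real.Gamma β := Real.Gamma_pos_of_pos hβ0
  have hG : ∀ m : ℕ, 0 < Real.Gamma (β * m + 1) := fun m =>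
    Real.Gamma_pos_of_pos (by positivity)
  induction n with
  | zero =>
    intro t
    simpa using (u - v).norm_coe_le_norm t
  | succ n ih =>
    intro t
    rw [Function.iterate_succ_apply', Function.iterate_succ_apply']
    refine (hK _ _ t).trans ?_
    rcases t.2.1.eq_or_lt with ht | ht
    · rw [← ht, Set.Ioo_self, setIntegral_empty, mul_zero]
      have := hG (n + 1)
      positivity
    set A : ℝ := (C * Real.Gamma β) ^ n / Real.Gamma (β * n + 1) * ‖u - v‖ with hA
    have hγ : 0 ≤ β * n := by positivity
    have hle : ∫ τ in Set.Ioo (0 : ℝ) (t : ℝ), ((t : ℝ) - τ) ^ (β - 1) *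
          ‖Set.IccExtend hT.le (K^[n] u) τ - Set.IccExtend hT.le (K^[n] v) τ‖ ≤
        ∫ τ in Set.Ioo (0 : ℝ) (t : ℝ), A * (((t : ℝ) - τ) ^ (β - 1) * τ ^ (β * n)) := by
      refine integral_mono_of_nonneg ?_
        ((integrableOn_kernel_mul_rpow ht hβ0 hγ).const_mul A) ?_
      · filter_upwards [ae_restrict_mem measurableSet_Ioo] with τ hτ
        exact mul_nonneg (Real.rpow_nonneg (sub_nonneg.2 hτ.2.le) _) (norm_nonneg _)
      · filter_upwards [ae_restrict_mem measurableSet_Ioo] with τ hτ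
        have hmem : τ ∈ Set.Icc (0 : ℝ) T := ⟨hτ.1.le, hτ.2.le.trans t.2.2⟩
        rw [Set.IccExtend_of_mem _ _ hmem, Set.IccExtend_of_mem _ _ hmem]
        calc _ ≤ ((t : ℝ) - τ) ^ (β - 1) * ((C * Real.Gamma β) ^ n * τ ^ (β * n) /
                Real.Gamma (β * n + 1) * ‖u - v‖) :=
              mul_le_mul_of_nonneg_left (ih ⟨τ, hmem⟩)
                (Real.rpow_nonneg (sub_nonneg.2 hτ.2.le) _)
          _ = _ := by rw [hA]; ring
    refine (mul_le_mul_of_nonneg_left hle hC).trans_eq ?_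
    have hexp : β * ((n + 1 : ℕ) : ℝ) = β * n + β := by push_cast; ring
    have h1 := (hG n).ne'
    have h2 := (hG (n + 1)).ne'
    rw [hexp] at h2 ⊢
    rw [integral_const_mul, integral_kernel_mul_rpow ht hβ0 hγ, hA]
    field_simp
    ring
end

section
/- Let E be a Banach space, T > 0, β ∈ (0,1], C ≥ 0, and let K : C([0,T];E) → C([0,T];E) be a map such that for all u, v ∈ C([0,T];E) and all t ∈ [0,T], ‖(Ku)(t) - (Kv)(t)‖ ≤ C ∫_0^t (t-τ)^{β-1} ‖u(τ) - v(τ)‖ dτ. Then K has a unique fixed point in C([0,T];E); that is, there exists exactly one u ∈ C([0,T];E) with Ku = u. -/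
/-!
The argument uses exponential (Bielecki) weights. If `‖u τ - v τ‖ ≤ M * exp (r * τ)` on `[0,T]`,
then the hypothesis on `K` gives `‖K u t - K v t‖ ≤ C * r ^ (-β) * Γ(β) * M * exp (r * t)`, because
`∫₀ᵗ (t - τ) ^ (β - 1) * exp (-r * (t - τ)) dτ` is at most the Gamma integral `r ^ (-β) * Γ(β)`
(`integral_singular_mul_exp_le`). For `r` large the factor `C * r ^ (-β) * Γ(β)` is at most `1 / 2`,
so `K^[n]` is Lipschitz for the supremum norm with constant `(1 / 2) ^ n * exp (r * T)`. Some iterate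
is therefore a strict contraction, and its fixed point is the unique fixed point of `K`.
-/

open Set MeasureTheory

lemma integrableOn_gamma_kernel {β r : ℝ} (hβ : 0 < β) (hr : 0 < r) :
    IntegrableOn (fun s : ℝ => s ^ (β - 1) * Real.exp (-(r * s))) (Ioi 0) := by
  have h := integrableOn_rpow_mul_exp_neg_mul_rpow (p := 1) (s := β - 1) (b := r)
    (by linarith) one_pos hr
  simpa [Real.rpow_one] using h

lemma singular_mul_exp_eq (β r t τ : ℝ) :
    (t - τ) ^ (β - 1) * Real.exp (r * τ) =
      Real.exp (r * t) * ((t - τ) ^ (β - 1) * Real.exp (-(r * (t - τ)))) := by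
  rw [mul_left_comm, ← Real.exp_add]
  congr 2
  ring

lemma integrableOn_singular_mul_exp {β r t : ℝ} (hβ : 0 < β) (hr : 0 < r) (ht : 0 ≤ t) :
    IntegrableOn (fun τ : ℝ => (t - τ) ^ (β - 1) * Real.exp (r * τ)) (Ioo 0 t) := by
  simp_rw [singular_mul_exp_eq β r t]
  refine Integrable.const_mul ?_ _
  have h : IntervalIntegrable (fun s : ℝ => s ^ (β - 1) * Real.exp (-(r * s))) volume 0 t :=
    (intervalIntegrable_iff_integrableOn_Ioc_of_le ht).2
      ((integrableOn_gamma_kernel hβ hr).mono_set Ioc_subset_Ioi_self)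
  have h2 := (h.comp_sub_left t).symm
  simp only [sub_self, sub_zero] at h2
  exact (intervalIntegrable_iff_integrableOn_Ioo_of_le ht).1 h2

/-- After the substitution `s = t - τ` the integral is `exp (r * t)` times a truncated Gamma
integral. -/
lemma integral_singular_mul_exp_le {β r t : ℝ} (hβ : 0 < β) (hr : 0 < r) (ht : 0 ≤ t) :
    ∫ τ in Ioo (0 : ℝ) t, (t - τ) ^ (β - 1) * Real.exp (r * τ) ≤
      Real.exp (r * t) * ((1 / r) ^ β * Real.Gamma β) := by
  simp_rw [singular_mul_exp_eq β r t]
  rw [integral_const_mul, ← integral_Ioc_eq_integral_Ioo, ← intervalIntegral.integral_of_le ht,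
    intervalIntegral.integral_comp_sub_left (fun s : ℝ => s ^ (β - 1) * Real.exp (-(r * s))) t,
    sub_self, sub_zero, intervalIntegral.integral_of_le ht,
    ← Real.integral_rpow_mul_exp_neg_mul_Ioi hβ hr]
  refine mul_le_mul_of_nonneg_left ?_ (Real.exp_pos _).le
  refine setIntegral_mono_set (integrableOn_gamma_kernel hβ hr) ?_
    (Ioc_subset_Ioi_self).eventuallyLE
  filter_upwards [ae_restrict_mem measurableSet_Ioi] with s hs
  exact mul_nonneg (Real.rpow_nonneg (le_of_lt hs) _) (Real.exp_pos _).le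

lemma exists_rate_le_half {β : ℝ} (hβ : 0 < β) (C : ℝ) :
    ∃ r : ℝ, 0 < r ∧ C * ((1 / r) ^ β * Real.Gamma β) ≤ 1 / 2 := by
  have h : Filter.Tendsto (fun r : ℝ => C * (r ^ (-β) * Real.Gamma β)) Filter.atTop
      (nhds (C * (0 * Real.Gamma β))) :=
    ((tendsto_rpow_neg_atTop hβ).mul_const _).const_mul _
  simp only [zero_mul, mul_zero] at h
  have h2 := h.eventually_le_const (show (0 : ℝ) < 1 / 2 by norm_num)
  obtain ⟨r, hr, hr0⟩ := (h2.and (Filter.eventually_gt_atTop 0)).exists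
  refine ⟨r, hr0, ?_⟩
  rwa [one_div, Real.inv_rpow hr0.le, ← Real.rpow_neg hr0.le]

/-- A map `K` on `C([0,T];E)` satisfying a weakly singular Gronwall-type
contraction estimate has a unique fixed point. -/
theorem exists_unique_fixedPoint_of_singular_contraction
    (E : Type*) [NormedAddCommGroup E] [NormedSpace ℝ E] [CompleteSpace E]
    (T : ℝ) (hT : 0 < T) (β : ℝ) (hβ : β ∈ Set.Ioc (0 : ℝ) 1) (C : ℝ) (hC : 0 ≤ C)
    (K : C(Set.Icc (0 : ℝ) T, E) → C(Set.Icc (0 : ℝ) T, E))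
    (hK : ∀ u v : C(Set.Icc (0 : ℝ) T, E), ∀ t : Set.Icc (0 : ℝ) T,
      ‖K u t - K v t‖ ≤ C * ∫ τ in Set.Ioo (0 : ℝ) (t : ℝ), ((t : ℝ) - τ) ^ (β - 1) *
        ‖Set.IccExtend hT.le u τ - Set.IccExtend hT.le v τ‖) :
    ∃! u : C(Set.Icc (0 : ℝ) T, E), K u = u := by
  obtain ⟨hβ0, -⟩ := hβ
  obtain ⟨r, hr, hq⟩ := exists_rate_le_half hβ0 C
  -- One application of `K` halves the exponentially weighted distance.
  have step : ∀ (u v : C(Set.Icc (0 : ℝ) T, E)) (M : ℝ), 0 ≤ M →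
      (∀ t : Set.Icc (0 : ℝ) T, ‖u t - v t‖ ≤ M * Real.exp (r * t)) →
      ∀ t : Set.Icc (0 : ℝ) T, ‖K u t - K v t‖ ≤ (1 / 2 * M) * Real.exp (r * t) := by
    intro u v M hM h t
    have hint : ∫ τ in Set.Ioo (0 : ℝ) (t : ℝ), ((t : ℝ) - τ) ^ (β - 1) *
        ‖Set.IccExtend hT.le u τ - Set.IccExtend hT.le v τ‖ ≤
        M * (Real.exp (r * t) * ((1 / r) ^ β * Real.Gamma β)) := by
      refine le_trans ?_ (mul_le_mul_of_nonneg_left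
        (integral_singular_mul_exp_le hβ0 hr t.2.1) hM)
      rw [← integral_const_mul]
      refine integral_mono_of_nonneg ?_
        ((integrableOn_singular_mul_exp hβ0 hr t.2.1).const_mul M) ?_
      · filter_upwards [ae_restrict_mem measurableSet_Ioo] with τ hτ
        exact mul_nonneg (Real.rpow_nonneg (sub_nonneg.2 hτ.2.le) _) (norm_nonneg _)
      · filter_upwards [ae_restrict_mem measurableSet_Ioo] with τ hτ
        have hmem : τ ∈ Set.Icc (0 : ℝ) T := ⟨hτ.1.le, hτ.2.le.trans t.2.2⟩
        simp only [Set.IccExtend_of_mem _ _ hmem]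
        rw [mul_left_comm]
        exact mul_le_mul_of_nonneg_left (h ⟨τ, hmem⟩)
          (Real.rpow_nonneg (sub_nonneg.2 hτ.2.le) _)
    calc ‖K u t - K v t‖
        ≤ C * (M * (Real.exp (r * t) * ((1 / r) ^ β * Real.Gamma β))) :=
          (hK u v t).trans (mul_le_mul_of_nonneg_left hint hC)
      _ = (C * ((1 / r) ^ β * Real.Gamma β)) * (M * Real.exp (r * t)) := by ring
      _ ≤ 1 / 2 * (M * Real.exp (r * t)) :=
          mul_le_mul_of_nonneg_right hq (mul_nonneg hM (Real.exp_pos _).le)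
      _ = (1 / 2 * M) * Real.exp (r * t) := by ring
  have iter : ∀ (n : ℕ) (u v : C(Set.Icc (0 : ℝ) T, E)) (t : Set.Icc (0 : ℝ) T),
      ‖K^[n] u t - K^[n] v t‖ ≤ ((1 / 2) ^ n * dist u v) * Real.exp (r * t) := by
    intro n u v
    induction n with
    | zero =>
      intro t
      have h1 : ‖u t - v t‖ ≤ dist u v := by
        rw [← dist_eq_norm]
        exact ContinuousMap.dist_apply_le_dist t
      have h2 : 1 ≤ Real.exp (r * t) := Real.one_le_exp (mul_nonneg hr.le t.2.1)
      simpa using h1.trans (le_mul_of_one_le_right dist_nonneg h2)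
    | succ n ih =>
      intro t
      rw [Function.iterate_succ_apply', Function.iterate_succ_apply', pow_succ', mul_assoc (1 / 2)]
      exact step _ _ _ (by positivity) ih t
  obtain ⟨n, hn⟩ : ∃ n : ℕ, (1 / 2 : ℝ) ^ n < 1 / 2 / Real.exp (r * T) :=
    exists_pow_lt_of_lt_one (by positivity) (by norm_num)
  rw [lt_div_iff₀ (Real.exp_pos _)] at hn
  have hcontr : ContractingWith (1 / 2) K^[n] := by
    refine ⟨by rw [← NNReal.coe_lt_coe]; norm_num, LipschitzWith.of_dist_le_mul fun u v => ?_⟩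
    rw [ContinuousMap.dist_le (by positivity)]
    intro t
    rw [dist_eq_norm]
    have hexp : Real.exp (r * t) ≤ Real.exp (r * T) :=
      Real.exp_le_exp.2 (mul_le_mul_of_nonneg_left t.2.2 hr.le)
    calc ‖K^[n] u t - K^[n] v t‖
        ≤ ((1 / 2) ^ n * dist u v) * Real.exp (r * t) := iter n u v t
      _ ≤ ((1 / 2) ^ n * dist u v) * Real.exp (r * T) := by gcongr
      _ = ((1 / 2) ^ n * Real.exp (r * T)) * dist u v := by ring
      _ ≤ 1 / 2 * dist u v := by gcongr
      _ = ((1 / 2 : NNReal) : ℝ) * dist u v := by norm_num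
  refine ⟨hcontr.fixedPoint K^[n], hcontr.isFixedPt_fixedPoint_iterate, fun v hv => ?_⟩
  have hv' : Function.IsFixedPt K^[n] v := Function.IsFixedPt.iterate hv n
  exact hcontr.fixedPoint_unique hv'
end

section
/- Let X be a complex Banach space, let (μ_k)_{k ∈ ℕ} be a strictly increasing sequence of positive real numbers tending to ∞, and let (v_k)_{k ∈ ℕ} be a sequence in X. Let D = ℂ \ {-μ_k : k ∈ ℕ}, and assume that the series J(η) = Σ_{k=0}^∞ v_k / (η + μ_k) converges in X for every η ∈ D, uniformly on every compact subset of D. If J(η) = 0 for every η in some nonempty open subset of D, then v_k = 0 for every k ∈ ℕ. -/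
open Filter

/-!
The exceptional set `{-μ_k}` is closed (since `μ_k → ∞`) and countable, so its complement `D` is
open and connected. The sum `J` is a locally uniform limit of holomorphic functions, hence
holomorphic on `D`, and the identity theorem gives `J = 0` on all of `D`. On a circle around `-μ_j`
whose closed disc contains no other `-μ_k`, the `N`-th partial sum has integral `2πi • v_j` as soon
as `N > j`, by Cauchy's theorem. Uniform convergence on the circle lets these integrals tend to
`∮ J = 0`, so `v_j = 0`.
-/

/-- Any set of the points `-μ_k` is closed: they cannot accumulate, because `|-μ_k| → ∞`. -/
lemma isClosed_image_neg_of_tendsto_atTop {μ : ℕ → ℝ} (hμtop : Tendsto μ atTop atTop)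
    (S : Set ℕ) : IsClosed (Set.image (fun k => -(μ k : ℂ)) S) := by
  have hproper : IsProperMap (fun k => -(μ k : ℂ)) := by
    rw [isProperMap_iff_tendsto_cocompact]
    refine ⟨continuous_of_discreteTopology, ?_⟩
    rw [cocompact_eq_cofinite, Nat.cofinite_eq_atTop, ← Metric.cobounded_eq_cocompact,
      ← tendsto_norm_atTop_iff_cobounded]
    simpa [Function.comp_def] using tendsto_abs_atTop_atTop.comp hμtop
  exact hproper.isClosedMap S (isClosed_discrete S)

lemma circleIntegral_inv_add_smul_self {X : Type*} [NormedAddCommGroup X] [NormedSpace ℂ X]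
    [CompleteSpace X] (a : ℂ) (x : X) {r : ℝ} (hr : r ≠ 0) :
    (∮ z in C(-a, r), (z + a)⁻¹ • x) = (2 * Real.pi * Complex.I : ℂ) • x := by
  rw [circleIntegral.integral_smul_const, ← circleIntegral.integral_sub_center_inv (-a) hr]
  simp only [sub_neg_eq_add]

lemma circleIntegral_inv_add_smul_of_notMem {X : Type*} [NormedAddCommGroup X] [NormedSpace ℂ X]
    {a c : ℂ} (x : X) {r : ℝ} (hr : 0 ≤ r) (ha : -a ∉ Metric.closedBall c r) :
    (∮ z in C(c, r), (z + a)⁻¹ • x) = 0 := by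
  have hd : DifferentiableOn ℂ (fun z : ℂ => (z + a)⁻¹ • x) (Metric.closedBall c r) := by
    refine DifferentiableOn.smul_const (DifferentiableOn.inv (by fun_prop) ?_) x
    intro z hz h
    exact ha (eq_neg_of_add_eq_zero_left h ▸ hz)
  exact (hd.diffContOnCl_ball subset_rfl).circleIntegral_eq_zero hr

/-- If the series `J(η) = Σ_k v_k / (η + μ_k)` (with `μ_k ↑ ∞` positive) converges on
`D = ℂ \ {-μ_k}`, uniformly on compacts, and `J` vanishes on a nonempty open subset of
`D`, then all coefficients `v_k` vanish. -/
theorem coefficients_eq_zero_of_resolvent_series_vanishes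
    (X : Type*) [NormedAddCommGroup X] [NormedSpace ℂ X] [CompleteSpace X]
    (μ : ℕ → ℝ) (hμ : StrictMono μ) (hμpos : ∀ k, 0 < μ k)
    (hμtop : Tendsto μ atTop atTop) (v : ℕ → X)
    (D : Set ℂ) (hD : D = {η : ℂ | ∀ k, η ≠ -(μ k : ℂ)})
    (hsum : ∀ η ∈ D, Summable fun k : ℕ => (η + (μ k : ℂ))⁻¹ • v k)
    (hunif : ∀ K ⊆ D, IsCompact K →
      TendstoUniformlyOn
        (fun (N : ℕ) (η : ℂ) => ∑ k ∈ Finset.range N, (η + (μ k : ℂ))⁻¹ • v k)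
        (fun η : ℂ => ∑' k : ℕ, (η + (μ k : ℂ))⁻¹ • v k) atTop K)
    (U : Set ℂ) (hUD : U ⊆ D) (hU : U.Nonempty) (hUopen : IsOpen U)
    (hvanish : ∀ η ∈ U, (∑' k : ℕ, (η + (μ k : ℂ))⁻¹ • v k) = 0) :
    ∀ k, v k = 0 := by
  subst hD
  set J : ℂ → X := fun η => ∑' k : ℕ, (η + (μ k : ℂ))⁻¹ • v k with hJ
  set D : Set ℂ := {η : ℂ | ∀ k, η ≠ -(μ k : ℂ)} with hD
  have hDcompl : D = (Set.range fun k => -(μ k : ℂ))ᶜ := by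
    ext η
    simp [hD, eq_comm]
  have hDopen : IsOpen D := by
    rw [hDcompl, ← Set.image_univ]
    exact (isClosed_image_neg_of_tendsto_atTop hμtop _).isOpen_compl
  have hDconn : IsPreconnected D := by
    rw [hDcompl]
    exact ((Set.countable_range _).isConnected_compl_of_one_lt_rank
      (by simp [Complex.rank_real_complex])).isPreconnected
  have hpartial : ∀ N : ℕ, DifferentiableOn ℂ
      (fun η : ℂ => ∑ k ∈ Finset.range N, (η + (μ k : ℂ))⁻¹ • v k) D := by
    intro N
    refine DifferentiableOn.fun_sum fun k _ => ?_
    refine DifferentiableOn.smul_const (DifferentiableOn.inv (by fun_prop) ?_) (v k)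
    intro η hη h
    exact hη k (eq_neg_of_add_eq_zero_left h)
  have hJdiff : DifferentiableOn ℂ J D :=
    ((tendstoLocallyUniformlyOn_iff_forall_isCompact hDopen).2 hunif).differentiableOn
      (Eventually.of_forall hpartial) hDopen
  have hJzero : Set.EqOn J 0 D := by
    obtain ⟨z₀, hz₀⟩ := hU
    refine (hJdiff.analyticOnNhd hDopen).eqOn_zero_of_preconnected_of_eventuallyEq_zero
      hDconn (hUD hz₀) ?_
    filter_upwards [hUopen.mem_nhds hz₀] with η hη using hvanish η hη
  intro j
  obtain ⟨r, hr, hball⟩ : ∃ r > 0, Metric.closedBall (-(μ j : ℂ)) r ⊆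
      (Set.image (fun k => -(μ k : ℂ)) {j}ᶜ)ᶜ := by
    refine Metric.nhds_basis_closedBall.mem_iff.1
      ((isClosed_image_neg_of_tendsto_atTop hμtop _).isOpen_compl.mem_nhds ?_)
    rintro ⟨k, hk, h⟩
    exact hk (hμ.injective (by simpa using h))
  have hpole : ∀ k, k ≠ j → -(μ k : ℂ) ∉ Metric.closedBall (-(μ j : ℂ)) r :=
    fun k hk h => hball h ⟨k, hk, rfl⟩
  have hsphere : Metric.sphere (-(μ j : ℂ)) r ⊆ D := by
    rintro z hz k rfl
    by_cases hk : k = j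
    · subst hk
      simp at hz
      exact hr.ne hz
    · exact hpole k hk (Metric.sphere_subset_closedBall hz)
  have hlim := (hunif _ hsphere (isCompact_sphere _ _)).tendsto_circleIntegral_of_continuousOn
    hr.le (Eventually.of_forall fun N => (hpartial N).continuousOn.mono hsphere)
  have hlim0 : (∮ z in C(-(μ j : ℂ), r), J z) = 0 := by
    rw [circleIntegral.integral_congr hr.le (hJzero.mono hsphere)]
    simp [circleIntegral]
  have hval : ∀ᶠ N : ℕ in atTop,
      (∮ z in C(-(μ j : ℂ), r), ∑ k ∈ Finset.range N, (z + (μ k : ℂ))⁻¹ • v k) =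
        (2 * Real.pi * Complex.I : ℂ) • v j := by
    filter_upwards [eventually_gt_atTop j] with N hN
    rw [circleIntegral.integral_fun_sum, Finset.sum_eq_single_of_mem j (Finset.mem_range.2 hN),
      circleIntegral_inv_add_smul_self _ _ hr.ne']
    · intro k _ hk
      exact circleIntegral_inv_add_smul_of_notMem _ hr.le (hpole k hk)
    · intro k _
      refine ContinuousOn.circleIntegrable hr.le ?_
      refine ContinuousOn.smul (ContinuousOn.inv₀ (by fun_prop) ?_) continuousOn_const
      intro η hη h
      exact hsphere hη k (eq_neg_of_add_eq_zero_left h)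
  have h := tendsto_nhds_unique (tendsto_const_nhds.congr' (hval.mono fun _ h => h.symm)) hlim
  rw [hlim0] at h
  exact (smul_eq_zero.1 h).resolve_left Complex.two_pi_I_ne_zero
end
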